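/- If a simple graph G has u vertices of odd degree and g ≥ 1 vertices of even degree, then the edge set of G can be partitioned into at most u/2 + g − 1 paths. -/

import Mathlib

namespace Lov

set_option linter.unusedSectionVars false

variable {V : Type} [DecidableEq V]

/-- edges of a vertex list -/
def pe : List V → Multiset (Sym2 V)
  | [] => 0
  | [_] => 0
  | x :: y :: l => s(x, y) ::ₘ pe (y :: l)

/-- the two ends of a vertex list -/
def en (l : List V) : Multiset V := (l.head?.toList : Multiset V) + (l.getLast?.toList : Multiset V)

/-- orientation -/
def od (s : Bool) (l : List V) : List V := if s then l else l.reverse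

theorem pe_split (X : List V) (w a : V) (Y : List V) :
    pe (X ++ w :: a :: Y) = pe (X ++ [w]) + s(w, a) ::ₘ pe (a :: Y) := by
  induction X with
  | nil => simp [pe]
  | cons x X ih =>
    cases X with
    | nil => simp only [List.cons_append, List.nil_append, pe, ← Multiset.singleton_add]; abel
    | cons y X =>
      simp only [List.cons_append, pe] at ih ⊢
      rw [ih]
      simp only [← Multiset.singleton_add]
      abel

theorem pe_reverse (l : List V) : pe l.reverse = pe l := by
  induction l with
  | nil => rfl
  | cons x l ih =>
    cases l with
    | nil => rfl
    | cons y l =>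
      have := pe_split l.reverse y x []
      simp only [List.reverse_cons, List.append_assoc, List.cons_append, List.nil_append] at ih ⊢
      rw [this, ih]
      simp only [pe, Sym2.eq_swap (a := x) (b := y), ← Multiset.singleton_add]
      abel

theorem en_reverse (l : List V) : en l.reverse = en l := by
  simp [en, add_comm]

theorem pe_od (s : Bool) (l : List V) : pe (od s l) = pe l := by
  cases s <;> simp [od, pe_reverse]

theorem en_od (s : Bool) (l : List V) : en (od s l) = en l := by
  cases s <;> simp [od, en_reverse]

theorem nodup_od (s : Bool) (l : List V) : (od s l).Nodup ↔ l.Nodup := by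
  cases s <;> simp [od]

theorem od_ne_nil (s : Bool) (l : List V) : od s l ≠ [] ↔ l ≠ [] := by
  cases s <;> simp [od]

theorem od_od (s : Bool) (l : List V) : od s (od s l) = l := by
  cases s <;> simp [od]

theorem od_not (s : Bool) (l : List V) : od (!s) l = (od s l).reverse := by
  cases s <;> simp [od]

theorem sum_update {ι M : Type} [Fintype ι] [DecidableEq ι] [AddCommMonoid M]
    (P : ι → List V) (f : List V → M) (i : ι) (N : List V) :
    ∑ j, f (Function.update P i N j) + f (P i) = ∑ j, f (P j) + f N := by
  rw [← Finset.add_sum_erase _ _ (Finset.mem_univ i),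
    ← Finset.add_sum_erase (Finset.univ) (fun j => f (P j)) (Finset.mem_univ i)]
  have : ∑ x ∈ Finset.univ.erase i, f (Function.update P i N x)
      = ∑ x ∈ Finset.univ.erase i, f (P x) := by
    apply Finset.sum_congr rfl
    intro x hx
    rw [Function.update_of_ne (Finset.ne_of_mem_erase hx)]
  rw [this]
  simp only [Function.update_self]
  abel

/-- `w` immediately precedes `a` on `l`. -/
def Pr (a w : V) (l : List V) : Prop := ∃ X Y, l = X ++ w :: a :: Y

theorem pr_iff {a z : V} {X Y : List V} (h : (X ++ a :: Y).Nodup) (hp : Pr a z (X ++ a :: Y)) :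
    ∃ X', X = X' ++ [z] := by
  obtain ⟨A, B, hAB⟩ := hp
  refine ⟨A, ?_⟩
  have h1 : X ++ a :: Y = (A ++ [z]) ++ a :: B := by simp [hAB]
  have haX : a ∉ X := by
    rw [List.nodup_append] at h; intro hx; exact h.2.2 a hx a (by simp) rfl
  have haA : a ∉ A ++ [z] := by
    rw [h1, List.nodup_append] at h; intro hx; exact h.2.2 a hx a (by simp) rfl
  have := congrArg (List.takeWhile (fun x => decide (x ≠ a))) h1
  rw [List.takeWhile_append_of_pos, List.takeWhile_append_of_pos] at this
  · simpa using this
  · intro x hx; simp; rintro rfl; exact haA hx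
  · intro x hx; simp; rintro rfl; exact haX hx

theorem pr_mem {a w : V} {l : List V} (h : Pr a w l) : s(w, a) ∈ pe l := by
  obtain ⟨X, Y, rfl⟩ := h
  rw [pe_split]; simp

theorem pr_inj {ι : Type} [Fintype ι] [DecidableEq ι] {P : ι → List V}
    (hn : ∀ i, (P i).Nodup) (hM : (∑ i, pe (P i)).Nodup) {a w : V} {e e' : ι × Bool}
    (h : Pr a w (od e.2 (P e.1))) (h' : Pr a w (od e'.2 (P e'.1))) : e = e' := by
  obtain ⟨i, s⟩ := e
  obtain ⟨j, t⟩ := e'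
  simp only at h h'
  have hij : i = j := by
    by_contra hne
    have m1 := pr_mem h
    have m2 := pr_mem h'
    rw [pe_od] at m1 m2
    rw [← Finset.add_sum_erase _ _ (Finset.mem_univ i),
      ← Finset.add_sum_erase _ _ (Finset.mem_erase.2 ⟨Ne.symm hne, Finset.mem_univ j⟩)] at hM
    rw [Multiset.nodup_add] at hM
    exact Multiset.disjoint_left.1 hM.2.2 m1 (by simp [m2])
  subst hij
  by_cases hst : s = t
  · rw [hst]
  exfalso
  have ht : t = !s := by cases s <;> cases t <;> simp_all
  subst ht
  rw [od_not] at h'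
  have hnd : (od s (P i)).Nodup := (nodup_od _ _).2 (hn i)
  obtain ⟨X, Y, hXY⟩ := h
  rw [hXY] at h' hnd
  have e1 : (X ++ w :: a :: Y).reverse = Y.reverse ++ a :: (w :: X.reverse) := by simp
  have hnd' := List.nodup_reverse.2 hnd
  rw [e1] at h' hnd'
  obtain ⟨X', hX'⟩ := pr_iff hnd' h'
  rw [hX'] at hnd'
  rw [List.nodup_append] at hnd'
  exact hnd'.2.2 w (by simp) w (by simp) rfl

theorem add_edge {ι : Type} [Fintype ι] [DecidableEq ι] (M : Multiset (Sym2 V)) (hM : M.Nodup)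
    (a : V) (e : V → ι × Bool) :
    ∀ (n : ℕ) (S : Finset V), S.card = n → ∀ (b : V) (P : ι → List V), b ∈ S → a ∉ S →
      (∀ i, P i ≠ [] ∧ (P i).Nodup) →
      (∑ i, pe (P i)) + {s(a, b)} = M →
      (∀ v ∈ S, (od (e v).2 (P (e v).1)).head? = some v) →
      (∀ v ∈ S, ∀ w, Pr a w (od (e v).2 (P (e v).1)) → w ∈ S ∧ w ≠ b) →
      ∃ P' : ι → List V, (∀ i, P' i ≠ [] ∧ (P' i).Nodup) ∧ (∑ i, pe (P' i)) = M ∧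
        (∑ i, en (P' i)) + {b} = (∑ i, en (P i)) + {a} := by
  intro n
  induction n with
  | zero => intro S hS b P hb; simp at hS; simp [hS] at hb
  | succ n ih =>
  intro S hS b P hb ha hP hPM hhead hpr
  obtain ⟨i, s, hei⟩ : ∃ i s, e b = (i, s) := ⟨_, _, rfl⟩
  have hba : b ≠ a := by rintro rfl; exact ha hb
  have hbh := hhead b hb
  rw [hei] at hbh
  simp only at hbh
  have hnd : (od s (P i)).Nodup := (nodup_od _ _).2 (hP i).2
  by_cases hmem : a ∈ od s (P i)
  · -- flip
    obtain ⟨X, Y, hXY⟩ := List.append_of_mem hmem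
    have hX : X ≠ [] := by
      rintro rfl
      rw [hXY] at hbh; simp at hbh; exact hba hbh.symm
    obtain ⟨X1, w, hw⟩ := X.eq_nil_or_concat.resolve_left hX
    rw [List.concat_eq_append] at hw
    obtain ⟨X2, hX2⟩ : ∃ X2, X = b :: X2 := by
      cases X with
      | nil => exact absurd rfl hX
      | cons x X2 =>
        rw [hXY] at hbh; simp at hbh; exact ⟨X2, by rw [hbh]⟩
    have hprw : Pr a w (od s (P i)) := ⟨X1, Y, by rw [hXY, hw]; simp⟩
    have hwS := hpr b hb w (by rw [hei]; exact hprw)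
    have hPn : (∑ i, pe (P i)).Nodup := by
      rw [← hPM] at hM; exact (Multiset.nodup_add.1 hM).1
    set N := X.reverse ++ a :: Y with hN
    set P1 := Function.update P i (od s N) with hP1
    have hpeN : pe N + {s(a, w)} = pe (P i) + {s(a, b)} := by
      rw [← pe_od s (P i), hXY]
      have h1 : pe N = pe X + s(b, a) ::ₘ pe (a :: Y) := by
        rw [hN, ← pe_reverse X, hX2]
        simpa using pe_split X2.reverse b a Y
      have h2 : pe (X ++ a :: Y) = pe X + s(w, a) ::ₘ pe (a :: Y) := by
        rw [hw]; simpa using pe_split X1 w a Y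
      rw [h1, h2, Sym2.eq_swap (a := a) (b := w), Sym2.eq_swap (a := a) (b := b)]
      simp only [← Multiset.singleton_add]
      abel
    have henN : en N + {b} = en (P i) + {w} := by
      rw [← en_od s (P i), hXY]
      have h1 : en N = {w} + ((a :: Y).getLast?.toList : Multiset V) := by
        rw [hN, hw]; simp [en, List.getLast?_cons]
      have h2 : en (X ++ a :: Y) = {b} + ((a :: Y).getLast?.toList : Multiset V) := by
        rw [hX2]; simp [en, List.getLast?_cons]
      rw [h1, h2]; abel
    have hNnd : N.Nodup := by
      rw [hXY] at hnd
      refine (List.Perm.nodup_iff ?_).1 hnd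
      exact List.Perm.append_right _ (List.reverse_perm X).symm
    have hP1pe := sum_update P pe i (od s N)
    have hP1en := sum_update P en i (od s N)
    rw [← hP1, pe_od] at hP1pe
    rw [← hP1, en_od] at hP1en
    -- behaviour of the other ends
    have hother : ∀ v ∈ S.erase b, ((od (e v).2 (P1 (e v).1)).head? = some v) ∧
        (∀ z, Pr a z (od (e v).2 (P1 (e v).1)) → Pr a z (od (e v).2 (P (e v).1))) := by
      intro v hv
      obtain ⟨hvb, hvS⟩ := Finset.mem_erase.1 hv
      have hvh := hhead v hvS
      by_cases hvi : (e v).1 = i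
      · have hvs : (e v).2 = !s := by
          by_contra hcon
          have : (e v).2 = s := by cases h : (e v).2 <;> cases s <;> simp_all
          rw [hvi, this, hbh] at hvh
          exact hvb (Option.some.inj hvh).symm
        have e1 : od (e v).2 (P1 (e v).1) = Y.reverse ++ a :: X := by
          rw [hvi, hvs, od_not, hP1, Function.update_self, od_od, hN]; simp
        have e2 : od (e v).2 (P (e v).1) = Y.reverse ++ a :: X.reverse := by
          rw [hvi, hvs, od_not, hXY]; simp
        rw [e2] at hvh
        rw [e1, e2]
        constructor
        · rw [← hvh]; simp
        · intro z hz
          have hnn : (Y.reverse ++ a :: X).Nodup := by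
            have := List.nodup_reverse.2 hNnd
            rw [hN] at this; simpa using this
          obtain ⟨X', hX'⟩ := pr_iff hnn hz
          exact ⟨X', X.reverse, by rw [hX']; simp⟩
      · have : P1 (e v).1 = P (e v).1 := by rw [hP1, Function.update_of_ne hvi]
        rw [this]
        exact ⟨hvh, fun z hz => hz⟩
    obtain ⟨P', hP', hpe', hen'⟩ := ih (S.erase b) (by rw [Finset.card_erase_of_mem hb]; omega)
      w P1 (Finset.mem_erase.2 ⟨hwS.2, hwS.1⟩) (fun h => ha (Finset.mem_of_mem_erase h))
      (by
        intro j
        by_cases hj : j = i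
        · subst hj
          rw [hP1, Function.update_self]
          exact ⟨(od_ne_nil _ _).2 (by simp [hN]), (nodup_od _ _).2 hNnd⟩
        · rw [hP1, Function.update_of_ne hj]; exact hP j)
      (by
        rw [← hPM]
        apply add_right_cancel (b := pe (P i))
        calc _ = (∑ j, pe (P1 j) + pe (P i)) + {s(a, w)} := by abel
          _ = ∑ j, pe (P j) + (pe N + {s(a, w)}) := by rw [hP1pe]; abel
          _ = _ := by rw [hpeN]; abel)
      (fun v hv => (hother v hv).1)
      (by
        intro v hv z hz
        have hz' := (hother v hv).2 z hz
        obtain ⟨hvb, hvS⟩ := Finset.mem_erase.1 hv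
        obtain ⟨hzS, hzb⟩ := hpr v hvS z hz'
        refine ⟨Finset.mem_erase.2 ⟨hzb, hzS⟩, ?_⟩
        rintro rfl
        have : e v = e b := pr_inj (fun i => (hP i).2) hPn hz' (by rw [hei]; exact hprw)
        have hvh := hhead v hvS
        rw [this, hhead b hb] at hvh
        exact hvb (Option.some.inj hvh).symm)
    refine ⟨P', hP', hpe', ?_⟩
    apply add_right_cancel (b := {w} + en (P i))
    calc _ = (∑ j, en (P' j) + {w}) + ({b} + en (P i)) := by abel
      _ = (∑ j, en (P1 j) + en (P i)) + {a} + {b} := by rw [hen']; abel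
      _ = ∑ j, en (P j) + (en N + {b}) + {a} := by rw [hP1en]; abel
      _ = _ := by rw [henN]; abel
  · -- extend
    obtain ⟨Z, hZ⟩ : ∃ Z, od s (P i) = b :: Z := by
      cases h : od s (P i) with
      | nil => rw [h] at hbh; simp at hbh
      | cons x Z => rw [h] at hbh; simp at hbh; exact ⟨Z, by rw [hbh]⟩
    have h1 := sum_update P pe i (a :: b :: Z)
    have h2 := sum_update P en i (a :: b :: Z)
    refine ⟨Function.update P i (a :: b :: Z), ?_, ?_, ?_⟩
    · intro j
      by_cases hj : j = i
      · subst hj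
        rw [Function.update_self]
        exact ⟨by simp, by rw [← hZ]; exact List.nodup_cons.2 ⟨hmem, hnd⟩⟩
      · rw [Function.update_of_ne hj]; exact hP j
    · apply add_right_cancel (b := pe (P i))
      rw [h1, ← hPM, ← pe_od s (P i), hZ]
      simp only [pe, ← Multiset.singleton_add]
      abel
    · apply add_right_cancel (b := en (P i))
      have : en (a :: b :: Z) + {b} = en (P i) + {a} := by
        rw [← en_od s (P i), hZ]
        simp only [en, List.getLast?_cons, List.head?_cons, Option.toList_some,
          Multiset.coe_singleton, Option.getD_some]
        abel
      calc _ = (∑ j, en (Function.update P i (a :: b :: Z) j) + en (P i)) + {b} := by abel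
        _ = ∑ j, en (P j) + (en (a :: b :: Z) + {b}) := by rw [h2]; abel
        _ = _ := by rw [this]; abel

/-- degree in an edge set -/
def dg (E : Finset (Sym2 V)) (v : V) : ℕ := (E.filter (fun e => v ∈ e)).card

theorem dg_erase (E : Finset (Sym2 V)) (x y v : V) (h : s(x, y) ∈ E) (hxy : x ≠ y) :
    dg E v = dg (E.erase s(x, y)) v + (if v = x then 1 else 0) + (if v = y then 1 else 0) := by
  unfold dg
  rw [Finset.filter_erase]
  by_cases hv : v ∈ s(x, y)
  · rw [Finset.card_erase_of_mem (by simp [h, hv])]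
    have : 0 < (E.filter (fun e => v ∈ e)).card := Finset.card_pos.2 ⟨s(x, y), by simp [h, hv]⟩
    rw [Sym2.mem_iff] at hv
    rcases hv with rfl | rfl
    · simp [hxy]; omega
    · simp [hxy.symm]; omega
  · rw [Finset.erase_eq_of_notMem (by simp [hv])]
    rw [Sym2.mem_iff] at hv
    push Not at hv
    simp [hv.1, hv.2]

theorem exists_end {ι : Type} [Fintype ι] {P : ι → List V} {v : V} (h : v ∈ ∑ i, en (P i)) :
    ∃ e : ι × Bool, (od e.2 (P e.1)).head? = some v := by
  rw [Multiset.mem_sum] at h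
  obtain ⟨i, -, hi⟩ := h
  simp only [en, Multiset.mem_add, Multiset.mem_coe, Option.mem_toList] at hi
  rcases hi with hi | hi
  · exact ⟨(i, true), by simpa [od] using hi⟩
  · exact ⟨(i, false), by simpa [od] using hi⟩

theorem lovasz [Fintype V] : ∀ (n : ℕ) (E : Finset (Sym2 V)), E.card = n →
    (∀ e ∈ E, ¬ e.IsDiag) → ∀ d : V → ℕ, (∀ v, Even (d v + dg E v)) →
    (∀ x y, d x = 0 → d y = 0 → dg E x ≠ 0 → dg E y ≠ 0 → x = y) →
    ∃ (ι : Type) (_ : Fintype ι) (P : ι → List V), (∀ i, P i ≠ [] ∧ (P i).Nodup) ∧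
      (∑ i, pe (P i)) = E.val ∧ ∀ v, (∑ i, en (P i)).count v = d v := by
  intro n
  induction n with
  | zero =>
    intro E hE _ d hd _
    rw [Finset.card_eq_zero] at hE
    subst hE
    refine ⟨Σ v : V, Fin (d v / 2), inferInstance, fun i => [i.1], by simp, by simp [pe], ?_⟩
    intro v
    rw [Fintype.sum_sigma, Multiset.count_sum']
    simp only [Finset.sum_const, Finset.card_univ, Fintype.card_fin, Multiset.count_nsmul, en]
    have := hd v
    simp [dg] at this
    rw [Finset.sum_eq_single v]
    · simp
      obtain ⟨k, hk⟩ := this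
      omega
    · intro w _ hw; simp [Ne.symm hw]
    · simp
  | succ n ih =>
    intro E hE hdiag d hd hz
    -- choose the edge
    obtain ⟨a, b, hab, hpos⟩ : ∃ a b, s(a, b) ∈ E ∧ ∀ v, v ≠ b → dg E v ≠ 0 → d v ≠ 0 := by
      by_cases hex : ∃ x, d x = 0 ∧ dg E x ≠ 0
      · obtain ⟨x, hx, hdx⟩ := hex
        obtain ⟨f, hf⟩ := Finset.card_pos.1 (Nat.pos_of_ne_zero hdx)
        rw [Finset.mem_filter] at hf
        obtain ⟨y, rfl⟩ := Sym2.mem_iff_exists.1 hf.2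
        refine ⟨y, x, by rw [Sym2.eq_swap]; exact hf.1, ?_⟩
        intro v hv hdv h0
        exact hv (hz v x h0 hx hdv hdx)
      · push Not at hex
        obtain ⟨f, hf⟩ := Finset.card_pos.1 (by omega : 0 < E.card)
        induction f with | _ a b =>
        exact ⟨a, b, hf, fun v _ hv h0 => hv (hex v h0)⟩
    have hne : a ≠ b := by simpa using hdiag _ hab
    have hdg := fun v => dg_erase E a b v hab hne
    have hdga : dg E a ≠ 0 := by have := hdg a; simp [hne] at this; omega
    have hda : d a ≠ 0 := hpos a hne hdga
    let d' : V → ℕ := fun v => if v = a then d a - 1 else if v = b then d b + 1 else d v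
    obtain ⟨ι, inst, P, hP, hpe, hen⟩ := ih (E.erase s(a, b))
      (by rw [Finset.card_erase_of_mem hab]; omega)
      (fun e he => hdiag e (Finset.mem_of_mem_erase he)) d'
      (by
        intro v
        have h1 := hdg v
        have h2 := hd v
        by_cases hva : v = a
        · subst hva
          simp only [d', if_true, if_neg hne] at h1 ⊢
          rw [Nat.even_iff] at *; omega
        · by_cases hvb : v = b
          · subst hvb
            simp only [d', if_true, if_neg hva] at h1 ⊢
            rw [Nat.even_iff] at *; omega
          · simp only [d', if_neg hva, if_neg hvb] at h1 ⊢
            rw [Nat.even_iff] at *; omega)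
      (by
        have key : ∀ x, d' x = 0 → dg (E.erase s(a, b)) x ≠ 0 → x = a := by
          intro x hx hdx
          by_contra hxa
          by_cases hxb : x = b
          · simp [d', hxb, hne.symm] at hx
          · simp only [d', if_neg hxa, if_neg hxb] at hx
            exact hpos x hxb (by have := hdg x; omega) hx
        intro x y hx hy hdx hdy
        rw [key x hx hdx, key y hy hdy])
    classical
    let S : Finset V := Finset.univ.filter (fun v => s(a, v) ∈ E)
    have hS : ∀ v ∈ S, ∃ e : ι × Bool, (od e.2 (P e.1)).head? = some v := by
      intro v hv
      apply exists_end
      rw [← Multiset.count_pos, hen]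
      have hvE : s(a, v) ∈ E := by simpa [S] using hv
      have hva : v ≠ a := by
        rintro rfl; exact hdiag _ hvE (by simp)
      simp only [d', if_neg hva]
      split_ifs with hvb
      · omega
      · apply Nat.pos_of_ne_zero
        apply hpos v hvb
        exact (Finset.card_pos.2 ⟨s(a, v), by simp [hvE]⟩).ne'
    obtain ⟨e0, -⟩ := hS b (by simp [S, hab])
    let e : V → ι × Bool := fun v => if h : v ∈ S then (hS v h).choose else e0
    have he : ∀ v ∈ S, (od (e v).2 (P (e v).1)).head? = some v := by
      intro v hv
      simp only [e, dif_pos hv]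
      exact (hS v hv).choose_spec
    obtain ⟨P', hP', hpe', hen'⟩ := add_edge E.val E.nodup a e S.card S rfl b P
      (by simp [S, hab])
      (by
        simp only [S, Finset.mem_filter, Finset.mem_univ, true_and]
        intro h; exact hdiag _ h (by simp))
      hP
      (by
        rw [hpe, Finset.erase_val, add_comm, Multiset.singleton_add]
        exact Multiset.cons_erase hab)
      he
      (by
        intro v hv w hw
        have hm := pr_mem hw
        rw [pe_od] at hm
        have : s(w, a) ∈ ∑ i, pe (P i) := Multiset.mem_sum.2 ⟨_, Finset.mem_univ _, hm⟩
        rw [hpe, Finset.mem_val, Finset.mem_erase, Sym2.eq_swap] at this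
        refine ⟨by simp [S, this.2], ?_⟩
        rintro rfl
        exact this.1 rfl)
    refine ⟨ι, inst, P', hP', hpe', ?_⟩
    intro v
    have h1 := congrArg (Multiset.count v) hen'
    rw [Multiset.count_add, Multiset.count_add, hen, Multiset.count_singleton,
      Multiset.count_singleton] at h1
    by_cases hva : v = a
    · subst hva
      simp [d', hne] at h1; omega
    · by_cases hvb : v = b
      · subst hvb
        simp [d', hva] at h1; omega
      · simpa [d', hva, hvb] using h1

theorem to_walk (G : SimpleGraph V) : ∀ l : List V, l ≠ [] → (∀ e ∈ pe l, e ∈ G.edgeSet) →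
    ∃ p : (Σ (a : V) (b : V), G.Walk a b), p.2.2.support = l ∧ (p.2.2.edges : Multiset _) = pe l := by
  intro l
  induction l with
  | nil => intro h; exact absurd rfl h
  | cons x l ih =>
    intro _ h
    cases l with
    | nil => exact ⟨⟨x, x, .nil⟩, by simp, by simp [pe]⟩
    | cons y l =>
      obtain ⟨⟨c, b, p⟩, hs, he⟩ := ih (by simp) (fun e he => h e (by simp [pe, he]))
      simp only at hs he
      have hc : c = y := by
        have := p.cons_tail_support
        rw [hs] at this; simp at this; exact this
      subst hc
      have hadj : G.Adj x c := by simpa using h s(x, c) (by simp [pe])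
      exact ⟨⟨x, b, .cons hadj p⟩, by simp [hs], by simp [pe, ← he]⟩

end Lov

/-- Lovász: if a simple graph G has u vertices of odd degree and
g ≥ 1 vertices of even degree, then E(G) can be partitioned into at most
u/2 + g − 1 paths. -/
theorem stmt_9 (n : ℕ) (G : SimpleGraph (Fin n)) [DecidableRel G.Adj]
    (u g : ℕ)
    (hu : u = (Finset.univ.filter fun v => Odd (G.degree v)).card)
    (hg : g = (Finset.univ.filter fun v => Even (G.degree v)).card)
    (hg1 : 1 ≤ g) :
    ∃ L : List (Σ (a : Fin n) (b : Fin n), G.Walk a b),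
      L.length ≤ u / 2 + g - 1 ∧
      (∀ p ∈ L, p.2.2.IsPath) ∧
      List.Pairwise (fun p q => ∀ e ∈ p.2.2.edges, e ∉ q.2.2.edges) L ∧
      (∀ e : Sym2 (Fin n), e ∈ G.edgeSet ↔ ∃ p ∈ L, e ∈ p.2.2.edges) := by
  classical
  have hdgG : ∀ v, Lov.dg G.edgeFinset v = G.degree v := by
    intro v
    rw [← SimpleGraph.card_incidenceFinset_eq_degree]
    unfold Lov.dg
    congr 1
    ext e
    simp [SimpleGraph.mem_incidenceFinset, SimpleGraph.incidenceSet]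
  obtain ⟨x0, hx0⟩ := Finset.card_pos.1 (by omega :
    0 < (Finset.univ.filter fun v => Even (G.degree v)).card)
  have hx0e : Even (G.degree x0) := by simpa using hx0
  let d : Fin n → ℕ := fun v => if Even (G.degree v) then (if v = x0 then 0 else 2) else 1
  obtain ⟨ι, inst, P, hP, hpe, hen⟩ := Lov.lovasz _ G.edgeFinset rfl
    (by
      intro e he
      exact G.not_isDiag_of_mem_edgeFinset he) d
    (by
      intro v
      rw [hdgG]
      simp only [d]
      split_ifs with h1 h2
      · simpa using h1
      · rw [Nat.even_iff] at *; omega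
      · rw [Nat.even_iff] at *; omega)
    (by
      have key : ∀ x, d x = 0 → x = x0 := by
        intro x hx
        simp only [d] at hx
        split_ifs at hx with h1 h2
        exact h2
      intro x y hx hy _ _
      rw [key x hx, key y hy])
  have hcard : 2 * Fintype.card ι = u + 2 * (g - 1) := by
    have h1 : (∑ i, Lov.en (P i)).card = 2 * Fintype.card ι := by
      rw [Multiset.card_sum]
      have : ∀ i ∈ (Finset.univ : Finset ι), (Lov.en (P i)).card = 2 := by
        intro i _
        have := (hP i).1
        simp only [Lov.en, Multiset.card_add, Multiset.coe_card]
        rw [List.head?_eq_some_head this, List.getLast?_eq_some_getLast this]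
        simp
      rw [Finset.sum_congr rfl this]
      simp [mul_comm]
    have h2 : (∑ i, Lov.en (P i)).card = ∑ v, d v := by
      rw [← Multiset.sum_count_eq_card (s := Finset.univ) (by simp)]
      exact Finset.sum_congr rfl (fun v _ => hen v)
    have h3 : ∑ v, d v + 2 = u + 2 * g := by
      have hpt : ∀ v, d v + (if v = x0 then 2 else 0)
          = (if Odd (G.degree v) then 1 else 0) + 2 * (if Even (G.degree v) then 1 else 0) := by
        intro v
        simp only [d, ← Nat.not_even_iff_odd]
        by_cases hv : v = x0
        · subst hv; simp [hx0e]
        · by_cases hve : Even (G.degree v) <;> simp [hv, hve]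
      have := Finset.sum_congr (rfl : (Finset.univ : Finset (Fin n)) = Finset.univ)
        (fun v _ => hpt v)
      rw [Finset.sum_add_distrib, Finset.sum_add_distrib, ← Finset.mul_sum] at this
      rw [hu, hg, Finset.card_filter, Finset.card_filter, ← this]
      simp
    omega
  have hmemE : ∀ e, e ∈ G.edgeSet ↔ ∃ i, e ∈ Lov.pe (P i) := by
    intro e
    rw [← SimpleGraph.mem_edgeFinset, ← Finset.mem_val, ← hpe, Multiset.mem_sum]
    simp
  have hw : ∀ i, ∃ p : (Σ (a : Fin n) (b : Fin n), G.Walk a b),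
      p.2.2.support = P i ∧ (p.2.2.edges : Multiset _) = Lov.pe (P i) := fun i =>
    Lov.to_walk G (P i) (hP i).1 (fun e he => (hmemE e).2 ⟨i, he⟩)
  choose W hWs hWe using hw
  have hWm : ∀ i e, e ∈ (W i).2.2.edges ↔ e ∈ Lov.pe (P i) := by
    intro i e
    rw [← hWe, Multiset.mem_coe]
  refine ⟨(Finset.univ : Finset ι).toList.map W, ?_, ?_, ?_, ?_⟩
  · simp only [List.length_map, Finset.length_toList, Finset.card_univ]
    omega
  · intro p hp
    obtain ⟨i, -, rfl⟩ := List.mem_map.1 hp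
    rw [SimpleGraph.Walk.isPath_def, hWs]
    exact (hP i).2
  · rw [List.pairwise_map]
    refine List.Pairwise.imp ?_ (Finset.nodup_toList (Finset.univ : Finset ι))
    intro i j hij e hi hj
    rw [hWm] at hi hj
    have hM : (∑ i, Lov.pe (P i)).Nodup := by rw [hpe]; exact G.edgeFinset.nodup
    rw [← Finset.add_sum_erase _ _ (Finset.mem_univ i),
      ← Finset.add_sum_erase _ _ (Finset.mem_erase.2 ⟨Ne.symm hij, Finset.mem_univ j⟩)] at hM
    rw [Multiset.nodup_add] at hM
    exact Multiset.disjoint_left.1 hM.2.2 hi (by simp [hj])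
  · intro e
    rw [hmemE]
    simp [hWm]
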